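/- Let K > 0, let N be an odd positive integer, let 0 ≤ β < N/10, and let x ∈ X_β. Then for every n ∈ ℤ the tail series converges and |Σ_{k=(N-1)/2}^∞ (K/(2k+1)!)·(x^{*(2k+1)})_n| ≤ ( K·(10β)^{N-1} / ( N!·(1 - (10β/N)²) ) ) · β/(|n|+1)². -/

import Mathlib

open scoped Real
open Complex Filter

/-- Convolution of two two-sided sequences of complex numbers. -/
noncomputable def conv (x y : ℤ → ℂ) : ℤ → ℂ := fun n => ∑' k : ℤ, x k * y (n - k)

/-- `convPow x k` is the `k`-fold convolution power `x^{*k}`;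
`x^{*0}` is the unit (Kronecker delta at `0`). -/
noncomputable def convPow (x : ℤ → ℂ) : ℕ → ℤ → ℂ
  | 0 => fun n => if n = 0 then 1 else 0
  | k + 1 => conv (convPow x k) x

/-- Membership in `X_β`: decay `|x_n| ≤ β/(|n|+1)^2` and the symmetry `x_{-n} = conj x_n`. -/
def memX (β : ℝ) (x : ℤ → ℂ) : Prop :=
  (∀ n : ℤ, ‖x n‖ ≤ β / (|(n : ℝ)| + 1) ^ 2) ∧ (∀ n : ℤ, x (-n) = starRingEnd ℂ (x n))

/-- The weight. -/
noncomputable def wt (n : ℤ) : ℝ := 1 / (|(n : ℝ)| + 1) ^ 2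

lemma wt_hasSum : ∃ S : ℝ, HasSum wt S ∧ S ≤ 5 / 2 := by
  have h0 := hasSum_zeta_two
  have h1 : HasSum (fun n : ℕ => 1 / ((n + 1 : ℕ) : ℝ) ^ 2) (π ^ 2 / 6) := by
    have := (hasSum_nat_add_iff' (f := fun n : ℕ => 1 / (n : ℝ) ^ 2) 1).2 h0
    simpa using this
  have h2 : HasSum (fun n : ℕ => 1 / ((n + 2 : ℕ) : ℝ) ^ 2) (π ^ 2 / 6 - 1) := by
    have := (hasSum_nat_add_iff' (f := fun n : ℕ => 1 / (n : ℝ) ^ 2) 2).2 h0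
    simpa [Finset.sum_range_succ] using this
  refine ⟨π ^ 2 / 6 + (π ^ 2 / 6 - 1), HasSum.of_nat_of_neg_add_one ?_ ?_, ?_⟩
  · convert h1 using 2 with n
    simp [wt]
  · convert h2 using 2 with n
    have : |((-((n : ℤ) + 1) : ℤ) : ℝ)| = (n : ℝ) + 1 := by
      push_cast
      rw [abs_neg, abs_of_nonneg (by positivity)]
    simp only [wt, this]
    push_cast
    ring
  · nlinarith [Real.pi_lt_d2, Real.pi_pos]

lemma wt_mul (n k : ℤ) : wt k * wt (n - k) ≤ 2 * wt n * (wt k + wt (n - k)) := by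
  unfold wt
  have ht : |(n : ℝ)| + 1 ≤ (|(k : ℝ)| + 1) + (|((n - k : ℤ) : ℝ)| + 1) := by
    have := abs_add_le (k : ℝ) ((n - k : ℤ) : ℝ)
    push_cast at this ⊢
    rw [add_sub_cancel] at this
    linarith
  have ha : 0 < |(k : ℝ)| + 1 := by positivity
  have hb : 0 < |((n - k : ℤ) : ℝ)| + 1 := by positivity
  have hc : 0 < |(n : ℝ)| + 1 := by positivity
  generalize |(k : ℝ)| + 1 = a at *
  generalize |((n - k : ℤ) : ℝ)| + 1 = b at *
  generalize |(n : ℝ)| + 1 = c at *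
  have h : c ^ 2 ≤ 2 * (a ^ 2 + b ^ 2) := by nlinarith [sq_nonneg (a - b)]
  have e1 : 1 / a ^ 2 * (1 / b ^ 2) = c ^ 2 / (a ^ 2 * b ^ 2 * c ^ 2) := by field_simp
  have e2 : 2 * (1 / c ^ 2) * (1 / a ^ 2 + 1 / b ^ 2)
      = 2 * (a ^ 2 + b ^ 2) / (a ^ 2 * b ^ 2 * c ^ 2) := by field_simp; ring
  rw [e1, e2]
  gcongr

lemma conv_bound (x y : ℤ → ℂ) (A B : ℝ) (hA : 0 ≤ A) (hB : 0 ≤ B)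
    (hx : ∀ n, ‖x n‖ ≤ A * wt n) (hy : ∀ n, ‖y n‖ ≤ B * wt n) (n : ℤ) :
    ‖conv x y n‖ ≤ 10 * A * B * wt n := by
  obtain ⟨S, hS, hS2⟩ := wt_hasSum
  have hw : ∀ n, 0 ≤ wt n := fun n => by unfold wt; positivity
  have hS' : HasSum (fun k => wt (n - k)) S := by
    have h := (Equiv.subLeft n).hasSum_iff (f := wt) (a := S)
    exact h.2 hS
  have h := ((hS.add hS').mul_left (A * B * (2 * wt n)))
  have hb : ‖conv x y n‖ ≤ A * B * (2 * wt n) * (S + S) := by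
    refine tsum_of_norm_bounded h fun k => ?_
    rw [norm_mul]
    calc ‖x k‖ * ‖y (n - k)‖ ≤ (A * wt k) * (B * wt (n - k)) :=
          mul_le_mul (hx k) (hy _) (norm_nonneg _) (mul_nonneg hA (hw k))
      _ = A * B * (wt k * wt (n - k)) := by ring
      _ ≤ A * B * (2 * wt n * (wt k + wt (n - k))) :=
          mul_le_mul_of_nonneg_left (wt_mul n k) (mul_nonneg hA hB)
      _ = _ := by ring
  have : 0 ≤ A * B * (2 * wt n) := mul_nonneg (mul_nonneg hA hB) (by linarith [hw n])
  calc ‖conv x y n‖ ≤ A * B * (2 * wt n) * (S + S) := hb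
    _ ≤ A * B * (2 * wt n) * 5 := mul_le_mul_of_nonneg_left (by linarith) this
    _ = 10 * A * B * wt n := by ring

lemma convPow_bound (x : ℤ → ℂ) (β : ℝ) (hβ : 0 ≤ β) (hx : ∀ n, ‖x n‖ ≤ β * wt n) (m : ℕ) :
    ∀ n, ‖convPow x (m + 1) n‖ ≤ (10 * β) ^ m * β * wt n := by
  induction m with
  | zero =>
    intro n
    have : convPow x (0 + 1) n = x n := by
      simp only [convPow, conv]
      rw [tsum_eq_single 0]
      · simp
      · intro k hk
        simp [hk]
    rw [this]
    simpa using hx n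
  | succ m ih =>
    intro n
    have := conv_bound (convPow x (m + 1)) x _ β (by positivity) hβ ih hx n
    calc _ ≤ _ := this
      _ = _ := by ring

/-- Lemma `lem:ogon`: tail estimate. For odd `N`, `0 ≤ β < N/10` and
`x ∈ X_β`, the tail `Σ_{k ≥ (N-1)/2} (K/(2k+1)!) (x^{*(2k+1)})_n` converges and is bounded by
`(K (10β)^{N-1} / (N! (1 - (10β/N)²))) · β/(|n|+1)²`. -/
theorem tail_estimate (K β : ℝ) (hK : 0 < K) (N : ℕ) (hN : Odd N) (hNpos : 0 < N)
    (hβ0 : 0 ≤ β) (hβN : β < N / 10) (x : ℤ → ℂ) (hx : memX β x) :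
    ∀ n : ℤ,
      Summable (fun j : ℕ =>
        (K / (Nat.factorial (2 * ((N - 1) / 2 + j) + 1) : ℂ)) *
          convPow x (2 * ((N - 1) / 2 + j) + 1) n) ∧
      ‖∑' j : ℕ, (K / (Nat.factorial (2 * ((N - 1) / 2 + j) + 1) : ℂ)) *
          convPow x (2 * ((N - 1) / 2 + j) + 1) n‖ ≤
        K * (10 * β) ^ (N - 1) / ((Nat.factorial N : ℝ) * (1 - (10 * β / N) ^ 2)) *
          (β / (|(n : ℝ)| + 1) ^ 2) := by
  intro n
  obtain ⟨M, rfl⟩ := hN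
  have hM : (2 * M + 1 - 1) / 2 = M := by omega
  have hM' : 2 * M + 1 - 1 = 2 * M := by omega
  rw [hM, hM']
  have hx' : ∀ n, ‖x n‖ ≤ β * wt n := fun n => by
    have := hx.1 n
    rw [wt, mul_one_div]
    exact this
  have hNr : (0 : ℝ) < ((2 * M + 1 : ℕ) : ℝ) := by positivity
  set L : ℝ := ((2 * M + 1 : ℕ) : ℝ) with hL
  have hr0 : 0 ≤ 10 * β / L := by positivity
  have hr1 : 10 * β / L < 1 := by
    rw [div_lt_one hNr]
    linarith
  have hq : (10 * β / L) ^ 2 < 1 := by nlinarith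
  have hw : 0 ≤ wt n := by unfold wt; positivity
  have hg := (hasSum_geometric_of_lt_one (sq_nonneg (10 * β / L)) hq).mul_left
    (K * (10 * β) ^ (2 * M) / ((2 * M + 1).factorial : ℝ) * (β * wt n))
  have hb : ∀ j : ℕ, ‖(K / (Nat.factorial (2 * (M + j) + 1) : ℂ)) *
      convPow x (2 * (M + j) + 1) n‖ ≤
      K * (10 * β) ^ (2 * M) / ((2 * M + 1).factorial : ℝ) * (β * wt n) *
        ((10 * β / L) ^ 2) ^ j := by
    intro j
    have hf : ((2 * M + 1).factorial : ℝ) * L ^ (2 * j) ≤ ((2 * (M + j) + 1).factorial : ℝ) := by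
      have h1 : (2 * M + 1).factorial * (2 * M + 1) ^ (2 * j) ≤ (2 * M + 1 + 2 * j).factorial :=
        le_trans (Nat.mul_le_mul_left _ (Nat.pow_le_pow_left (Nat.le_succ _) _))
          Nat.factorial_mul_pow_le_factorial
      have h2 : 2 * M + 1 + 2 * j = 2 * (M + j) + 1 := by ring
      rw [h2] at h1
      rw [hL]
      exact_mod_cast h1
    have hfp : (0 : ℝ) < ((2 * M + 1).factorial : ℝ) := by positivity
    rw [norm_mul, norm_div, Complex.norm_natCast, Complex.norm_real, Real.norm_of_nonneg hK.le]
    calc _ ≤ K / (((2 * M + 1).factorial : ℝ) * L ^ (2 * j)) *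
          ((10 * β) ^ (2 * (M + j)) * β * wt n) := by
          refine mul_le_mul ?_ (convPow_bound x β hβ0 hx' _ n) (norm_nonneg _) (by positivity)
          gcongr
      _ = _ := by
          rw [← pow_mul, div_pow, mul_add, pow_add]
          field_simp
  refine ⟨Summable.of_norm_bounded hg.summable hb, (tsum_of_norm_bounded hg hb).trans (le_of_eq ?_)⟩
  have : 1 - (10 * β / L) ^ 2 ≠ 0 := by linarith
  rw [wt, mul_one_div, mul_right_comm, ← div_eq_mul_inv, div_div]
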